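/- Let (X, A_X) be a network, δ > 0, and let Z be the set of equivalence classes of X under the relation x ∼ x' iff u^NR_X(x,x') ≤ δ, where u^NR_X is the nonreciprocal ultrametric. Endow Z with the dissimilarity A_Z(z,z') = min over x in the class z and x' in the class z' of A_X(x,x') for z ≠ z', and A_Z(z,z) = 0. If Z has at least two elements, then the minimum loop cost of the quotient network satisfies mlc(Z, A_Z) > δ. -/

import Mathlib

noncomputable section

/-- A dissimilarity function on a node set: nonnegative and zero exactly on the diagonal.
It need not be symmetric nor satisfy the triangle inequality. -/
def IsDissim {X : Type} (A : X → X → ℝ) : Prop :=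
  (∀ x x', 0 ≤ A x x') ∧ (∀ x x', A x x' = 0 ↔ x = x')

/-- A symmetric dissimilarity. -/
def IsSym {X : Type} (A : X → X → ℝ) : Prop := ∀ x x', A x x' = A x' x

/-- An ultrametric: nonnegative, zero exactly on the diagonal, symmetric, and
satisfying the strong triangle inequality. -/
def IsUltrametric {X : Type} (u : X → X → ℝ) : Prop :=
  (∀ x x', 0 ≤ u x x') ∧ (∀ x x', u x x' = 0 ↔ x = x') ∧
    (∀ x x', u x x' = u x' x) ∧
    (∀ x x' x'', u x x'' ≤ max (u x x') (u x' x''))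

/-- The cost of the chain `x :: l`: the maximum dissimilarity over consecutive links. -/
def chainCost {X : Type} (A : X → X → ℝ) : X → List X → ℝ
  | _, [] => 0
  | x, y :: l => max (A x y) (chainCost A y l)

/-- The set of costs of chains from `x` to `x'`. -/
def chainCosts {X : Type} (A : X → X → ℝ) (x x' : X) : Set ℝ :=
  {c | ∃ l : List X, (x :: l).getLast (List.cons_ne_nil x l) = x' ∧ chainCost A x l = c}

/-- The directed minimum chain cost `ũ*_X(x,x')`: minimum cost over all chains from `x` to `x'`. -/
def minChainCost {X : Type} (A : X → X → ℝ) (x x' : X) : ℝ :=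
  sInf (chainCosts A x x')

/-- The nonreciprocal ultrametric `u^NR`. -/
def nonrecipUltra {X : Type} (A : X → X → ℝ) (x x' : X) : ℝ :=
  max (minChainCost A x x') (minChainCost A x' x)

/-- The reciprocal ultrametric `u^R`. -/
def recipUltra {X : Type} (A : X → X → ℝ) (x x' : X) : ℝ :=
  minChainCost (fun a b => max (A a b) (A b a)) x x'

/-- The unilateral ultrametric `u^U`. -/
def uniUltra {X : Type} (A : X → X → ℝ) (x x' : X) : ℝ :=
  minChainCost (fun a b => min (A a b) (A b a)) x x'

/-- The minimum loop cost `mlc(X, A_X)`: minimum cost over loops, i.e. chains from some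
node `x` back to itself containing at least one node different from `x`. -/
def mlc {X : Type} (A : X → X → ℝ) : ℝ :=
  sInf {c | ∃ (x : X) (l : List X),
    (x :: l).getLast (List.cons_ne_nil x l) = x ∧ (∃ y ∈ l, y ≠ x) ∧ chainCost A x l = c}

/-- The separation `sep(X, A_X)`: minimum dissimilarity over pairs of distinct nodes. -/
def sep {X : Type} (A : X → X → ℝ) : ℝ :=
  sInf {c | ∃ x x' : X, x ≠ x' ∧ A x x' = c}

/-- A hierarchical clustering method: assigns to every (finite) network an output
two-variable function on the same node set. -/
abbrev HCMethod := ∀ (X : Type) [Fintype X], (X → X → ℝ) → X → X → ℝ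

/-- A hierarchical clustering method outputs an ultrametric on every network. -/
def IsHCMethod (H : HCMethod) : Prop :=
  ∀ (X : Type) [Fintype X] (A : X → X → ℝ), IsDissim A → IsUltrametric (H X A)

/-- `p, q` are the two (distinct) nodes of a two-node set. -/
def TwoNode {X : Type} (p q : X) : Prop := p ≠ q ∧ ∀ x : X, x = p ∨ x = q

/-- Axiom of Value (A1): on every two-node network the output clusters the two nodes at
the maximum of the two dissimilarities. -/
def AxiomValue (H : HCMethod) : Prop :=
  ∀ (X : Type) [Fintype X] (p q : X), TwoNode p q →
    ∀ A : X → X → ℝ, IsDissim A → H X A p q = max (A p q) (A q p)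

/-- Axiom of Transformation (A2): dissimilarity-reducing maps do not increase output values. -/
def AxiomTransform (H : HCMethod) : Prop :=
  ∀ (X Y : Type) [Fintype X] [Fintype Y] (AX : X → X → ℝ) (AY : Y → Y → ℝ),
    IsDissim AX → IsDissim AY →
    ∀ φ : X → Y, (∀ x x', AY (φ x) (φ x') ≤ AX x x') →
    ∀ x x' : X, H Y AY (φ x) (φ x') ≤ H X AX x x'

/-- The canonical dissimilarity `A_{n,α,β}` on `Fin n`: `α` for `i > j`, `β` for `i < j`,
`0` on the diagonal. -/
def canonDissim (n : ℕ) (α β : ℝ) : Fin n → Fin n → ℝ :=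
  fun i j => if i = j then 0 else if j < i then α else β

/-- Extended Axiom of Value (A1'): on every permuted canonical network `Δ_n(α,β,Π)` the
output ultrametric equals `max(α,β)` off the diagonal. -/
def ExtAxiomValue (H : HCMethod) : Prop :=
  ∀ (n : ℕ) (α β : ℝ), 0 < α → 0 < β → ∀ π : Equiv.Perm (Fin n),
    ∀ i j : Fin n, i ≠ j →
      H (Fin n) (fun i j => canonDissim n α β (π i) (π j)) i j = max α β

/-- Alternative Axiom of Value (A1''): on every two-node network the output clusters the
two nodes at the minimum of the two dissimilarities. -/
def AltAxiomValue (H : HCMethod) : Prop :=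
  ∀ (X : Type) [Fintype X] (p q : X), TwoNode p q →
    ∀ A : X → X → ℝ, IsDissim A → H X A p q = min (A p q) (A q p)

/-- Agnostic Axiom of Value (A1'''): on every two-node network the output value lies
between the minimum and maximum of the two dissimilarities. -/
def AgnAxiomValue (H : HCMethod) : Prop :=
  ∀ (X : Type) [Fintype X] (p q : X), TwoNode p q →
    ∀ A : X → X → ℝ, IsDissim A →
      min (A p q) (A q p) ≤ H X A p q ∧ H X A p q ≤ max (A p q) (A q p)

/-! A directed minimum chain cost `ũ*` above `δ` does not decrease in the quotient:
`ũ*_X(x, x') ≤ max(δ, ũ*_Z([x], [x']))`. For a single link between two classes this is the strong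
triangle inequality for `ũ*_X`, applied through the endpoints of any link of `X` between them; for
a chain it follows by induction on its length. Hence distinct classes satisfy `u^NR_Z > δ`. A loop
through two distinct nodes is a chain there followed by a chain back, so its cost is at least their
`u^NR_Z`. -/

theorem getLast_cons_append {α : Type*} (x : α) (l l' : List α) :
    (x :: (l ++ l')).getLast (List.cons_ne_nil _ _) =
      ((x :: l).getLast (List.cons_ne_nil _ _) :: l').getLast (List.cons_ne_nil _ _) := by
  cases l' <;> simp

section Chains

variable {X : Type} (A : X → X → ℝ)

theorem chainCost_nonneg (x : X) (l : List X) : 0 ≤ chainCost A x l := by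
  induction l generalizing x with
  | nil => exact le_rfl
  | cons y l ih => exact (ih y).trans (le_max_right _ _)

theorem chainCost_append (x : X) (l l' : List X) :
    chainCost A x (l ++ l') =
      max (chainCost A x l) (chainCost A ((x :: l).getLast (List.cons_ne_nil x l)) l') := by
  induction l generalizing x with
  | nil => exact (max_eq_right (chainCost_nonneg A x l')).symm
  | cons y l ih =>
    rw [List.cons_append, chainCost, ih, chainCost, max_assoc,
      List.getLast_cons (List.cons_ne_nil y l)]

theorem chainCost_mem_insert_zero_range (x : X) (l : List X) :
    chainCost A x l ∈ insert 0 (Set.range (Function.uncurry A)) := by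
  induction l generalizing x with
  | nil => exact Set.mem_insert 0 _
  | cons y l ih =>
    rcases max_choice (A x y) (chainCost A y l) with h | h
    · exact Or.inr ⟨(x, y), h.symm⟩
    · rw [chainCost, h]
      exact ih y

theorem chainCosts_nonempty (x y : X) : (chainCosts A x y).Nonempty :=
  ⟨_, [y], rfl, rfl⟩

theorem minChainCost_nonneg (x y : X) : 0 ≤ minChainCost A x y := by
  refine Real.sInf_nonneg ?_
  rintro _ ⟨l, -, rfl⟩
  exact chainCost_nonneg A x l

theorem minChainCost_le_chainCost {x y : X} {l : List X}
    (hl : (x :: l).getLast (List.cons_ne_nil x l) = y) :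
    minChainCost A x y ≤ chainCost A x l := by
  refine csInf_le ⟨0, ?_⟩ ⟨l, hl, rfl⟩
  rintro _ ⟨l', -, rfl⟩
  exact chainCost_nonneg A x l'

theorem minChainCost_le_max_zero (x y : X) : minChainCost A x y ≤ max (A x y) 0 :=
  minChainCost_le_chainCost A (l := [y]) rfl

theorem minChainCost_triangle_max (x y z : X) :
    minChainCost A x z ≤ max (minChainCost A x y) (minChainCost A y z) := by
  refine le_of_forall_gt_imp_ge_of_dense fun c hc => ?_
  obtain ⟨hxy, hyz⟩ := max_lt_iff.1 hc
  obtain ⟨_, ⟨l, rfl, rfl⟩, hl⟩ := exists_lt_of_csInf_lt (chainCosts_nonempty A x y) hxy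
  obtain ⟨_, ⟨l', rfl, rfl⟩, hl'⟩ := exists_lt_of_csInf_lt (chainCosts_nonempty A _ z) hyz
  calc
    minChainCost A x _ ≤ chainCost A x (l ++ l') :=
      minChainCost_le_chainCost A (getLast_cons_append x l l')
    _ = max (chainCost A x l) (chainCost A _ l') := chainCost_append A x l l'
    _ ≤ c := max_le hl.le hl'.le

theorem nonrecipUltra_le_chainCost_of_mem_loop {x y : X} {l : List X}
    (hl : (x :: l).getLast (List.cons_ne_nil x l) = x) (hy : y ∈ l) :
    nonrecipUltra A x y ≤ chainCost A x l := by
  obtain ⟨l₁, l₂, rfl⟩ := List.append_of_mem hy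
  rw [List.append_cons] at hl ⊢
  have hlast : (x :: (l₁ ++ [y])).getLast (List.cons_ne_nil _ _) = y := by simp
  rw [getLast_cons_append] at hl
  rw [chainCost_append]
  simp only [hlast] at hl ⊢
  exact max_le_max (minChainCost_le_chainCost A hlast) (minChainCost_le_chainCost A hl)

theorem exists_ne_nonrecipUltra_le_mlc [Finite X] [Nontrivial X] :
    ∃ x y : X, x ≠ y ∧ nonrecipUltra A x y ≤ mlc A := by
  let loopCosts : Set ℝ := {c | ∃ (x : X) (l : List X),
    (x :: l).getLast (List.cons_ne_nil x l) = x ∧ (∃ y ∈ l, y ≠ x) ∧ chainCost A x l = c}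
  have loopCosts_nonempty : loopCosts.Nonempty := by
    obtain ⟨x, y, hxy⟩ := exists_pair_ne X
    exact ⟨_, x, [y, x], rfl, ⟨y, List.mem_cons_self, hxy.symm⟩, rfl⟩
  have loopCosts_finite : loopCosts.Finite := by
    refine ((Set.finite_range (Function.uncurry A)).insert 0).subset ?_
    rintro _ ⟨x, l, -, -, rfl⟩
    exact chainCost_mem_insert_zero_range A x l
  obtain ⟨x, l, hl, ⟨y, hy, hyx⟩, hcost⟩ := loopCosts_nonempty.csInf_mem loopCosts_finite
  exact ⟨x, y, hyx.symm, (nonrecipUltra_le_chainCost_of_mem_loop A hl hy).trans_eq hcost⟩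

end Chains

section Projection

variable {X Z : Type} {A : X → X → ℝ} {B : Z → Z → ℝ} {φ : X → Z} {δ : ℝ}

theorem minChainCost_le_max_sInf_fiber
    (hfiber : ∀ x x', φ x = φ x' → minChainCost A x x' ≤ δ) (x x' : X) :
    minChainCost A x x' ≤
      max δ (sInf {c | ∃ a a' : X, φ a = φ x ∧ φ a' = φ x' ∧ A a a' = c}) := by
  have hδ : 0 ≤ δ := (minChainCost_nonneg A x x).trans (hfiber x x rfl)
  refine le_max_iff.2 (or_iff_not_imp_left.2 fun hlt => ?_)
  refine le_csInf ⟨_, x, x', rfl, rfl, rfl⟩ ?_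
  rintro _ ⟨a, a', ha, ha', rfl⟩
  have le_max_link : minChainCost A x x' ≤ max δ (A a a') :=
    calc
      minChainCost A x x'
          ≤ max (minChainCost A x a) (max (minChainCost A a a') (minChainCost A a' x')) :=
        (minChainCost_triangle_max A x a x').trans
          (max_le_max le_rfl (minChainCost_triangle_max A a a' x'))
      _ ≤ max δ (max (max (A a a') 0) δ) :=
        max_le_max (hfiber x a ha.symm)
          (max_le_max (minChainCost_le_max_zero A a a') (hfiber a' x' ha'))
      _ = max δ (A a a') := by
        rw [max_comm δ, max_assoc, max_self, max_assoc, max_eq_right hδ, max_comm]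
  exact (le_max_iff.1 le_max_link).resolve_left hlt

theorem minChainCost_le_max_chainCost_map (hφ : Function.Surjective φ)
    (hfiber : ∀ x x', φ x = φ x' → minChainCost A x x' ≤ δ)
    (hlink : ∀ x x', φ x ≠ φ x' → minChainCost A x x' ≤ max δ (B (φ x) (φ x')))
    {x x' : X} {l : List Z} (hl : (φ x :: l).getLast (List.cons_ne_nil _ l) = φ x') :
    minChainCost A x x' ≤ max δ (chainCost B (φ x) l) := by
  induction l generalizing x with
  | nil => exact (hfiber x x' hl).trans (le_max_left _ _)
  | cons w l ih =>
    obtain ⟨y, rfl⟩ := hφ w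
    rw [List.getLast_cons (List.cons_ne_nil _ l)] at hl
    have hxy : minChainCost A x y ≤ max δ (B (φ x) (φ y)) := by
      by_cases h : φ x = φ y
      · exact (hfiber x y h).trans (le_max_left _ _)
      · exact hlink x y h
    calc
      minChainCost A x x' ≤ max (minChainCost A x y) (minChainCost A y x') :=
        minChainCost_triangle_max A x y x'
      _ ≤ max (max δ (B (φ x) (φ y))) (max δ (chainCost B (φ y) l)) := max_le_max hxy (ih hl)
      _ = max δ (chainCost B (φ x) (φ y :: l)) := (sup_sup_distrib_left δ _ _).symm

theorem minChainCost_le_max_minChainCost_map (hφ : Function.Surjective φ)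
    (hfiber : ∀ x x', φ x = φ x' → minChainCost A x x' ≤ δ)
    (hlink : ∀ x x', φ x ≠ φ x' → minChainCost A x x' ≤ max δ (B (φ x) (φ x'))) (x x' : X) :
    minChainCost A x x' ≤ max δ (minChainCost B (φ x) (φ x')) := by
  refine le_max_iff.2 (or_iff_not_imp_left.2 fun hlt => ?_)
  refine le_csInf (chainCosts_nonempty B _ _) ?_
  rintro _ ⟨l, hl, rfl⟩
  exact (le_max_iff.1 (minChainCost_le_max_chainCost_map hφ hfiber hlink hl)).resolve_left hlt

end Projection

theorem quotient_mlc_gt_delta_general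
    {X : Type} {A : X → X → ℝ} {δ : ℝ} {s : Setoid X}
    [Finite (Quotient s)] [Nontrivial (Quotient s)]
    (hs : ∀ x x' : X, s.r x x' ↔ nonrecipUltra A x x' ≤ δ)
    {AZ : Quotient s → Quotient s → ℝ}
    (hAZ : ∀ z z' : Quotient s, z ≠ z' →
      AZ z z' = sInf {c | ∃ x x' : X,
        Quotient.mk s x = z ∧ Quotient.mk s x' = z' ∧ A x x' = c}) :
    δ < mlc AZ := by
  have hfiber (x x' : X) (h : Quotient.mk s x = Quotient.mk s x') : minChainCost A x x' ≤ δ :=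
    (le_max_left _ _).trans ((hs x x').1 (Quotient.exact h))
  have hlink (x x' : X) (h : Quotient.mk s x ≠ Quotient.mk s x') :
      minChainCost A x x' ≤ max δ (AZ (Quotient.mk s x) (Quotient.mk s x')) := by
    rw [hAZ _ _ h]
    exact minChainCost_le_max_sInf_fiber hfiber x x'
  have hlift (x x' : X) := minChainCost_le_max_minChainCost_map
    Quotient.mk_surjective hfiber hlink x x'
  obtain ⟨z, z', hne, hle⟩ := exists_ne_nonrecipUltra_le_mlc AZ
  obtain ⟨x, rfl⟩ := Quotient.mk_surjective z
  obtain ⟨x', rfl⟩ := Quotient.mk_surjective z'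
  by_contra! hmlc
  obtain ⟨hxx', hx'x⟩ := max_le_iff.1 (hle.trans hmlc)
  refine hne (Quotient.sound ((hs x x').2 (max_le ?_ ?_)))
  · exact (hlift x x').trans (max_le le_rfl hxx')
  · exact (hlift x' x).trans (max_le le_rfl hx'x)

/-- The quotient network of nonreciprocal equivalence classes at resolution `δ`
has minimum loop cost greater than `δ`. -/
theorem quotient_mlc_gt_delta
    (X : Type) [Fintype X] (A : X → X → ℝ) (hA : IsDissim A)
    (δ : ℝ) (hδ : 0 < δ) (s : Setoid X)
    (hs : ∀ x x' : X, s.r x x' ↔ nonrecipUltra A x x' ≤ δ)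
    (AZ : Quotient s → Quotient s → ℝ)
    (hAZ : ∀ z z' : Quotient s, z ≠ z' →
      AZ z z' = sInf {c | ∃ x x' : X,
        Quotient.mk s x = z ∧ Quotient.mk s x' = z' ∧ A x x' = c})
    (hAZ0 : ∀ z : Quotient s, AZ z z = 0)
    (hZ : ∃ z z' : Quotient s, z ≠ z') :
    δ < mlc AZ := by
  have : Nontrivial (Quotient s) := ⟨hZ⟩
  exact quotient_mlc_gt_delta_general hs hAZ
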